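/- For any perturbation bound ε with 0 < ε < η, the adversarial-training objective v(w) = p·Φ((w + (η − ε)·n)/√n) + (1 − p)·Φ((−w + (η − ε)·n)/√n) attains a strict global maximum over ℝ at the unique point w₁^{AT} = (ln p − ln(1 − p))/(2(η − ε)); that is, v(w) < v(w₁^{AT}) for every real w ≠ w₁^{AT}. (Theorem 4.2, adversarial training.) -/

import Mathlib

/-!
With `d = η - ε`, completing the square in the Gaussian density gives
`v'(w) = K(w) * (exp (log p - d * w) - exp (log (1 - p) + d * w))` with `K(w) > 0`
(`hasDerivAt_v`). Hence `v'(w)` has the sign of `log p - log (1 - p) - 2 * d * w`: positive to the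
left of the critical point and negative to its right, so that `v` is strictly increasing up to
this point and strictly decreasing after it.
-/

/-- The standard normal CDF. -/
noncomputable def Phi (t : ℝ) : ℝ :=
  (Real.sqrt (2 * Real.pi))⁻¹ * ∫ s in Set.Iic t, Real.exp (-(s ^ 2) / 2)

/-- The expected clean accuracy `u(w)` for parameters `p`, `η`, `n`. -/
noncomputable def u (p η : ℝ) (n : ℕ) (w : ℝ) : ℝ :=
  p * Phi ((w + η * n) / Real.sqrt n) + (1 - p) * Phi ((-w + η * n) / Real.sqrt n)

/-- The adversarial-training objective `v(w)`. -/
noncomputable def v (p η ε : ℝ) (n : ℕ) (w : ℝ) : ℝ :=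
  p * Phi ((w + (η - ε) * n) / Real.sqrt n) + (1 - p) * Phi ((-w + (η - ε) * n) / Real.sqrt n)

lemma hasDerivAt_Phi (t : ℝ) :
    HasDerivAt Phi ((Real.sqrt (2 * Real.pi))⁻¹ * Real.exp (-(t ^ 2) / 2)) t := by
  have hint : MeasureTheory.Integrable (fun s : ℝ => Real.exp (-(s ^ 2) / 2)) := by
    have h := integrable_exp_neg_mul_sq (b := 1 / 2) (by norm_num)
    refine h.congr (Filter.Eventually.of_forall fun s => ?_)
    simp only
    congr 1
    ring
  have hcont : Continuous (fun s : ℝ => Real.exp (-(s ^ 2) / 2)) := by fun_prop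
  have hPhi : Phi = fun x => (Real.sqrt (2 * Real.pi))⁻¹ *
      ((∫ s in (0 : ℝ)..x, Real.exp (-(s ^ 2) / 2)) +
        ∫ s in Set.Iic (0 : ℝ), Real.exp (-(s ^ 2) / 2)) := by
    funext x
    rw [← intervalIntegral.integral_Iic_sub_Iic hint.integrableOn hint.integrableOn, Phi]
    ring
  rw [hPhi]
  exact ((hcont.integral_hasStrictDerivAt 0 t).hasDerivAt.add_const _).const_mul _

lemma hasDerivAt_v (p η ε : ℝ) (n : ℕ) (hp0 : 0 < p) (hp1 : p < 1) (hn : 0 < n) (w : ℝ) :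
    HasDerivAt (v p η ε n)
      ((Real.sqrt (2 * Real.pi))⁻¹ * (Real.sqrt n)⁻¹ *
        Real.exp (-(w ^ 2 + ((η - ε) * n) ^ 2) / (2 * n)) *
        (Real.exp (Real.log p - (η - ε) * w) - Real.exp (Real.log (1 - p) + (η - ε) * w))) w := by
  have hn' : (0 : ℝ) < n := by exact_mod_cast hn
  have h1 : HasDerivAt (fun w : ℝ => (w + (η - ε) * n) / Real.sqrt n) (1 / Real.sqrt n) w :=
    ((hasDerivAt_id w).add_const _).div_const _
  have h2 : HasDerivAt (fun w : ℝ => (-w + (η - ε) * n) / Real.sqrt n) (-1 / Real.sqrt n) w :=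
    ((hasDerivAt_id w).neg.add_const _).div_const _
  have h := (((hasDerivAt_Phi _).comp w h1).const_mul p).add
    (((hasDerivAt_Phi _).comp w h2).const_mul (1 - p))
  refine HasDerivAt.congr_deriv h ?_
  have e1 : -(((w + (η - ε) * n) / Real.sqrt n) ^ 2) / 2 =
      -(w ^ 2 + ((η - ε) * n) ^ 2) / (2 * n) + -((η - ε) * w) := by
    rw [div_pow, Real.sq_sqrt hn'.le]
    field_simp
    ring
  have e2 : -(((-w + (η - ε) * n) / Real.sqrt n) ^ 2) / 2 =
      -(w ^ 2 + ((η - ε) * n) ^ 2) / (2 * n) + (η - ε) * w := by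
    rw [div_pow, Real.sq_sqrt hn'.le]
    field_simp
    ring
  rw [e1, e2, sub_eq_add_neg (Real.log p), Real.exp_add, Real.exp_add, Real.exp_add, Real.exp_add,
    Real.exp_log hp0, Real.exp_log (sub_pos.2 hp1)]
  ring

/-- Theorem 4.2 (adversarial training): for `0 < ε < η`, the AT objective `v` attains a
strict global maximum at the unique point `w₁^{AT} = (ln p − ln(1−p))/(2(η−ε))`. -/
theorem adversarial_training
    (p η ε : ℝ) (n : ℕ) (hp : 1 / 2 < p) (hp1 : p < 1) (hη : 0 < η) (hn : 0 < n)
    (hε : 0 < ε) (hεη : ε < η) :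
    ∀ w : ℝ, w ≠ (Real.log p - Real.log (1 - p)) / (2 * (η - ε)) →
      v p η ε n w < v p η ε n ((Real.log p - Real.log (1 - p)) / (2 * (η - ε))) := by
  intro w hw
  have hd : 0 < 2 * (η - ε) := by linarith
  have hn' : (0 : ℝ) < n := by exact_mod_cast hn
  have hder := hasDerivAt_v p η ε n (by linarith) hp1 hn
  have hcont : Continuous (v p η ε n) :=
    continuous_iff_continuousAt.2 fun x => (hder x).continuousAt
  have hK : ∀ x : ℝ, 0 < (Real.sqrt (2 * Real.pi))⁻¹ * (Real.sqrt n)⁻¹ *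
      Real.exp (-(x ^ 2 + ((η - ε) * n) ^ 2) / (2 * n)) := fun x => by positivity
  set c := (Real.log p - Real.log (1 - p)) / (2 * (η - ε)) with hc
  rcases lt_or_gt_of_ne hw with h | h
  · refine strictMonoOn_of_deriv_pos (convex_Iic c) hcont.continuousOn (fun x hx => ?_)
      h.le Set.self_mem_Iic h
    rw [interior_Iic, Set.mem_Iio, hc, lt_div_iff₀ hd] at hx
    rw [(hder x).deriv]
    exact mul_pos (hK x) (sub_pos.2 (Real.exp_lt_exp.2 (by linarith)))
  · refine strictAntiOn_of_deriv_neg (convex_Ici c) hcont.continuousOn (fun x hx => ?_)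
      Set.self_mem_Ici h.le h
    rw [interior_Ici, Set.mem_Ioi, hc, div_lt_iff₀ hd] at hx
    rw [(hder x).deriv]
    exact mul_neg_of_pos_of_neg (hK x) (sub_neg.2 (Real.exp_lt_exp.2 (by linarith)))
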